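/- arXiv:1605.00773 — 2 statements merged into one kernel-verified Lean document; each statement's English description precedes it below -/
import Mathlib

section
/- Let V be an n-element set, let X ⊆ V with |X| = ⌈(n+1)/3⌉, and let H be the 3-graph on V whose edges are all 3-element subsets e of V with |e ∩ X| ≠ 2. Then H contains no tight Hamiltonian cycle, and for every ε > 0 there exists n_0 such that for all n ≥ n_0, δ(H) ≥ (5/9 − ε)·C(n−1,2). -/
open Finset

/-- A tight Hamiltonian cycle in a 3-graph `H` on a finite vertex set `V`:
a cyclic ordering of all vertices in which every three cyclically
consecutive vertices form an edge of `H`. -/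
def HasTightHamCycle {V : Type} [DecidableEq V] [Fintype V] (H : Finset (Finset V)) : Prop :=
  ∃ f : ZMod (Fintype.card V) → V, Function.Bijective f ∧
    ∀ i, ({f i, f (i + 1), f (i + 2)} : Finset V) ∈ H

/-- The 3-graph on `V` whose edges are all 3-element subsets `e` with `|e ∩ X| ≠ 2`. -/
def compX (V : Type) [DecidableEq V] [Fintype V] (X : Finset V) : Finset (Finset V) :=
  ((Finset.univ : Finset V).powersetCard 3).filter fun e => (e ∩ X).card ≠ 2

/-!
Call `|e ∩ X|` the weight of a triple `e`. Along a tight Hamiltonian cycle the weights of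
consecutive triples differ by at most one, and the weight two is forbidden. So either every triple
lies in `X`, and `X = V`, or every triple has weight at most one, and summing the weights gives
`3|X| ≤ n`. Both are excluded by `n < 3|X| ≤ n + 3` and `n ≥ 3`.

A vertex in `X` has degree `C(|X| - 1, 2) + C(n - |X|, 2)` and a vertex outside `X` has degree
`C(n - 1, 2) - C(|X|, 2)`. With `|X| ≈ n/3` these are about `5/9` and `8/9` of `C(n - 1, 2)`, and
the bound `5/9 · C(n - 1, 2)` is missed by at most `n/3`, which is `o(n²)`.
-/

open Filter Asymptotics

section CyclicWindows

theorem sum_add_shift_add_shift {G M : Type*} [AddGroup G] [Fintype G] [AddCommMonoid M]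
    (g : G → M) (a b : G) :
    ∑ i, (g i + g (i + a) + g (i + b)) = 3 • ∑ i, g i := by
  have sum_shift (c : G) : ∑ i, g (i + c) = ∑ i, g i := Equiv.sum_comp (Equiv.addRight c) g
  rw [sum_add_distrib, sum_add_distrib, sum_shift, sum_shift]
  abel

variable {n : ℕ} [NeZero n]

theorem forall_zmod_of_add_one {P : ZMod n → Prop} (step : ∀ i, P i → P (i + 1))
    {i : ZMod n} (hi : P i) (j : ZMod n) : P j := by
  have forward (k : ℕ) : P (i + k) := by
    induction k with
    | zero => simpa using hi
    | succ k ih => simpa [add_assoc] using step _ ih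
  simpa using forward (j - i).val

variable {g : ZMod n → ℕ}

theorem eq_one_or_window_sum_le_one (hle : ∀ i, g i ≤ 1)
    (hne : ∀ i, g i + g (i + 1) + g (i + 2) ≠ 2) :
    (∀ i, g i = 1) ∨ ∀ i, g i + g (i + 1) + g (i + 2) ≤ 1 := by
  by_contra! ⟨⟨j, hj⟩, i, hi⟩
  have step (k : ZMod n) (hk : g k + g (k + 1) + g (k + 2) = 3) :
      g (k + 1) + g (k + 1 + 1) + g (k + 1 + 2) = 3 := by
    have hnext := hne (k + 1)
    rw [show k + 1 + 1 = k + 2 by ring] at hnext ⊢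
    have := hle k
    have := hle (k + 1)
    have := hle (k + 2)
    have := hle (k + 1 + 2)
    omega
  have window_eq_three (k : ZMod n) (hk : 1 < g k + g (k + 1) + g (k + 2)) :
      g k + g (k + 1) + g (k + 2) = 3 := by
    have := hne k
    have := hle k
    have := hle (k + 1)
    have := hle (k + 2)
    omega
  have full := forall_zmod_of_add_one (P := fun k => g k + g (k + 1) + g (k + 2) = 3) step
    (window_eq_three i hi) j
  have := hle j
  have := hle (j + 1)
  have := hle (j + 2)
  omega

theorem eq_one_or_three_mul_sum_le (hle : ∀ i, g i ≤ 1)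
    (hne : ∀ i, g i + g (i + 1) + g (i + 2) ≠ 2) :
    (∀ i, g i = 1) ∨ 3 * ∑ i, g i ≤ n := by
  refine (eq_one_or_window_sum_le_one hle hne).imp_right fun hwindow => ?_
  calc 3 * ∑ i, g i = ∑ i, (g i + g (i + 1) + g (i + 2)) :=
        (sum_add_shift_add_shift g 1 2).symm
    _ ≤ ∑ _i : ZMod n, 1 := sum_le_sum fun i _ => hwindow i
    _ = n := by simp [ZMod.card]

end CyclicWindows

section Counting

variable {α : Type*}

theorem disjoint_powersetCard {s t : Finset α} (h : Disjoint s t) {k : ℕ} (hk : k ≠ 0) :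
    Disjoint (s.powersetCard k) (t.powersetCard k) := by
  rw [disjoint_left]
  intro p hps hpt
  rw [mem_powersetCard] at hps hpt
  have hp : p = ∅ := subset_empty.1 (h hps.1 hpt.1)
  exact hk (by rw [← hps.2, hp, card_empty])

variable [DecidableEq α]

theorem card_triple_inter {a b c : α} (s : Finset α) (h : #{a, b, c} = 3) :
    #({a, b, c} ∩ s) =
      (if a ∈ s then 1 else 0) + (if b ∈ s then 1 else 0) + (if c ∈ s then 1 else 0) := by
  have hbc : b ≠ c := by grind
  have ha : a ∉ ({b, c} : Finset α) := by grind
  rw [← filter_mem_eq_inter, card_filter, sum_insert ha, sum_pair hbc, add_assoc]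

theorem card_filter_mem_powersetCard_succ {s : Finset α} {v : α} (hv : v ∈ s) (k : ℕ)
    (P : Finset α → Prop) [DecidablePred P] :
    #{e ∈ s.powersetCard (k + 1) | P e ∧ v ∈ e} =
      #{p ∈ (s.erase v).powersetCard k | P (insert v p)} := by
  refine card_nbij' (·.erase v) (insert v ·) ?_ ?_ ?_ ?_
  · intro e he
    simp only [coe_filter, mem_powersetCard, Set.mem_ofPred_eq] at he ⊢
    obtain ⟨⟨hes, hcard⟩, hP, hve⟩ := he
    exact ⟨⟨erase_subset_erase v hes, by rw [card_erase_of_mem hve, hcard, Nat.add_sub_cancel]⟩,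
      by rwa [insert_erase hve]⟩
  · intro p hp
    simp only [coe_filter, mem_powersetCard, Set.mem_ofPred_eq, subset_erase] at hp ⊢
    obtain ⟨⟨⟨hps, hvp⟩, hcard⟩, hP⟩ := hp
    exact ⟨⟨insert_subset hv hps, by rw [card_insert_of_notMem hvp, hcard]⟩, hP,
      mem_insert_self v p⟩
  · intro e he
    exact insert_erase (mem_filter.1 he).2.2
  · intro p hp
    exact erase_insert (subset_erase.1 (mem_powersetCard.1 (mem_filter.1 hp).1).1).2

theorem card_inter_eq_card_iff {p s : Finset α} : #(p ∩ s) = #p ↔ p ⊆ s := by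
  rw [← inter_eq_left]
  exact ⟨fun h => eq_of_subset_of_card_le inter_subset_left h.ge, fun h => by rw [h]⟩

theorem card_inter_ne_one_iff_of_card_eq_two {p s : Finset α} (hp : #p = 2) :
    #(p ∩ s) ≠ 1 ↔ p ⊆ s ∨ Disjoint p s := by
  have hle : #(p ∩ s) ≤ 2 := hp ▸ card_le_card inter_subset_left
  rw [← card_inter_eq_card_iff, disjoint_iff_inter_eq_empty, ← card_eq_zero, hp]
  omega

end Counting

section Construction

/-- The degree `deg_H(v)` of a vertex `v` in the hypergraph with edge set `H`; its minimum over `v`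
is `δ(H)`, which is bounded below by bounding every degree. -/
def vertexDegree {V : Type*} [DecidableEq V] (H : Finset (Finset V)) (v : V) : ℕ :=
  #{e ∈ H | v ∈ e}

variable {V : Type} [DecidableEq V] [Fintype V] {X : Finset V} {v : V}

theorem mem_compX {e : Finset V} : e ∈ compX V X ↔ #e = 3 ∧ #(e ∩ X) ≠ 2 := by
  simp [compX]

theorem card_eq_three_of_mem_compX (e : Finset V) (he : e ∈ compX V X) : #e = 3 :=
  (mem_compX.1 he).1

theorem three_le_card_of_hasTightHamCycle {H : Finset (Finset V)} (hH : ∀ e ∈ H, #e = 3)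
    (h : HasTightHamCycle H) : 3 ≤ Fintype.card V := by
  obtain ⟨f, -, hedge⟩ := h
  exact hH _ (hedge 0) ▸ card_le_univ _

theorem eq_univ_or_three_mul_card_le_of_hasTightHamCycle (h : HasTightHamCycle (compX V X)) :
    X = univ ∨ 3 * #X ≤ Fintype.card V := by
  have hcard := three_le_card_of_hasTightHamCycle card_eq_three_of_mem_compX h
  have : NeZero (Fintype.card V) := ⟨by omega⟩
  obtain ⟨f, hf, hedge⟩ := h
  have hne (i : ZMod (Fintype.card V)) : (if f i ∈ X then 1 else 0) +
      (if f (i + 1) ∈ X then 1 else 0) + (if f (i + 2) ∈ X then 1 else 0) ≠ 2 := by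
    obtain ⟨hcard, hinter⟩ := mem_compX.1 (hedge i)
    rwa [card_triple_inter X hcard] at hinter
  have hsum : ∑ i, (if f i ∈ X then 1 else 0) = #X := by
    rw [hf.sum_comp fun v => if v ∈ X then 1 else 0]
    simp
  have hle (i : ZMod (Fintype.card V)) : (if f i ∈ X then 1 else 0) ≤ 1 := by
    split_ifs <;> simp
  rw [← hsum]
  refine (eq_one_or_three_mul_sum_le hle hne).imp_left fun hone => eq_univ_of_forall ?_
  exact hf.surjective.forall.2 fun i => by simpa using hone i

theorem vertexDegree_compX (X : Finset V) (v : V) :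
    vertexDegree (compX V X) v =
      #{p ∈ (univ.erase v).powersetCard 2 | #(insert v p ∩ X) ≠ 2} := by
  rw [vertexDegree, compX, filter_filter]
  exact card_filter_mem_powersetCard_succ (mem_univ v) 2 fun e => #(e ∩ X) ≠ 2

theorem vertexDegree_compX_of_mem (hv : v ∈ X) :
    vertexDegree (compX V X) v = (#X - 1).choose 2 + (Fintype.card V - #X).choose 2 := by
  have hpairs : {p ∈ (univ.erase v).powersetCard 2 | #(insert v p ∩ X) ≠ 2} =
      (X.erase v).powersetCard 2 ∪ Xᶜ.powersetCard 2 := by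
    ext p
    have hedge (hp : #p = 2) (hvp : v ∉ p) :
        #(insert v p ∩ X) ≠ 2 ↔ p ⊆ X ∨ Disjoint p X := by
      rw [insert_inter_of_mem hv, card_insert_of_notMem (by simp [hvp]),
        ← card_inter_ne_one_iff_of_card_eq_two hp]
      omega
    have hvp (h : Disjoint p X) : v ∉ p := fun hmem => disjoint_left.1 h hmem hv
    simp only [mem_filter, mem_union, mem_powersetCard, subset_erase, subset_univ, true_and,
      subset_compl_iff_disjoint_right]
    tauto
  have hdisj : Disjoint (X.erase v) Xᶜ := disjoint_compl_right.mono_left (erase_subset v X)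
  rw [vertexDegree_compX, hpairs, card_union_of_disjoint (disjoint_powersetCard hdisj two_ne_zero),
    card_powersetCard, card_powersetCard, card_erase_of_mem hv, card_compl]

theorem vertexDegree_compX_of_notMem (hv : v ∉ X) :
    vertexDegree (compX V X) v = (Fintype.card V - 1).choose 2 - (#X).choose 2 := by
  have hpairs : {p ∈ (univ.erase v).powersetCard 2 | #(insert v p ∩ X) ≠ 2} =
      (univ.erase v).powersetCard 2 \ X.powersetCard 2 := by
    ext p
    rw [mem_filter, Finset.mem_sdiff]
    refine and_congr_right fun hp => ?_
    obtain ⟨-, hcard⟩ := mem_powersetCard.1 hp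
    rw [insert_inter_of_notMem hv, ne_eq, ← hcard, card_inter_eq_card_iff, mem_powersetCard,
      and_iff_left rfl]
  have hX : X ⊆ univ.erase v := subset_erase.2 ⟨subset_univ X, hv⟩
  rw [vertexDegree_compX, hpairs, card_sdiff_of_subset (powersetCard_mono hX), card_powersetCard,
    card_powersetCard, card_erase_of_mem (mem_univ v), card_univ]

theorem le_vertexDegree_compX (hupper : 3 * #X ≤ Fintype.card V + 3) (v : V) :
    5 / 9 * ((Fintype.card V - 1).choose 2 : ℝ) - Fintype.card V / 3 ≤
      vertexDegree (compX V X) v := by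
  have hn : 1 ≤ Fintype.card V := Fintype.card_pos_iff.2 ⟨v⟩
  have hXn : #X ≤ Fintype.card V := card_le_univ X
  have hupper' : 3 * (#X : ℝ) ≤ Fintype.card V + 3 := by exact_mod_cast hupper
  by_cases hv : v ∈ X
  · have hX : 1 ≤ #X := card_pos.2 ⟨v, hv⟩
    rw [vertexDegree_compX_of_mem hv]
    push_cast [Nat.cast_choose_two, hn, hX, hXn]
    nlinarith [sq_nonneg (3 * (#X : ℝ) - Fintype.card V - 3 / 2)]
  · have hdeg : ((Fintype.card V - 1).choose 2 : ℝ) - (#X).choose 2 ≤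
        vertexDegree (compX V X) v := by
      rw [vertexDegree_compX_of_notMem hv, sub_le_iff_le_add]
      exact_mod_cast le_tsub_add
    refine hdeg.trans' ?_
    push_cast [Nat.cast_choose_two, hn]
    have hchoose : (#X : ℝ) * (#X - 1) ≤ (Fintype.card V + 3) / 3 * (Fintype.card V / 3) := by
      calc (#X : ℝ) * (#X - 1) ≤ #X * (Fintype.card V / 3) := by gcongr; linarith
        _ ≤ (Fintype.card V + 3) / 3 * (Fintype.card V / 3) := by gcongr; linarith
    nlinarith [sq_nonneg ((Fintype.card V : ℝ) - 3 / 2)]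

end Construction

theorem le_mul_and_mul_lt_of_eq_ceil_div {x m d : ℕ} (hd : 0 < d)
    (h : (x : ℤ) = ⌈(m : ℚ) / d⌉) : m ≤ d * x ∧ d * x < m + d := by
  have hd' : (0 : ℚ) < d := by exact_mod_cast hd
  obtain ⟨hlt, hle⟩ := Int.ceil_eq_iff.1 h.symm
  rw [div_le_iff₀ hd'] at hle
  rw [lt_div_iff₀ hd'] at hlt
  push_cast at hlt hle
  constructor
  · rw [mul_comm]
    exact_mod_cast hle
  · have : (d : ℚ) * x < m + d := by linarith
    exact_mod_cast this

theorem isLittleO_natCast_choose_pred {k : ℕ} (hk : 1 < k) :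
    (fun n : ℕ => (n : ℝ)) =o[atTop] fun n => ((n - 1).choose k : ℝ) := by
  have hpred : (fun n : ℕ => (n : ℝ)) =O[atTop] fun n => ((n - 1 : ℕ) : ℝ) := by
    refine IsBigO.of_bound 2 ((eventually_ge_atTop 2).mono fun n hn => ?_)
    rw [Real.norm_natCast, Real.norm_natCast]
    exact_mod_cast (by omega : n ≤ 2 * (n - 1))
  have hchoose : (fun n : ℕ => (n : ℝ)) =o[atTop] fun n => (n.choose k : ℝ) := by
    have hpow : (fun n : ℕ => (n : ℝ) ^ 1) =o[atTop] fun n => (n : ℝ) ^ k :=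
      (isLittleO_pow_pow_atTop_of_lt hk).comp_tendsto tendsto_natCast_atTop_atTop
    simpa using hpow.trans_isBigO (isTheta_choose k).isBigO_symm
  exact hpred.trans_isLittleO (hchoose.comp_tendsto (tendsto_sub_atTop_nat 1))

/-- If `|X| = ⌈(n+1)/3⌉`, then the 3-graph of all triples `e` with `|e ∩ X| ≠ 2` has no
tight Hamiltonian cycle, and for every `ε > 0` its minimum vertex degree is at least
`(5/9 - ε)·C(n-1,2)` once `n` is large. -/
theorem stmt_1 :
    (∀ (V : Type) [DecidableEq V] [Fintype V], ∀ X : Finset V,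
        (X.card : ℤ) = ⌈((Fintype.card V : ℚ) + 1) / 3⌉ →
        ¬ HasTightHamCycle (compX V X)) ∧
    (∀ ε : ℝ, 0 < ε → ∃ n₀ : ℕ, ∀ n : ℕ, n₀ ≤ n →
      ∀ (V : Type) [DecidableEq V] [Fintype V], ∀ X : Finset V,
        Fintype.card V = n →
        (X.card : ℤ) = ⌈((n : ℚ) + 1) / 3⌉ →
        ∀ v : V, (5 / 9 - ε) * ((n - 1).choose 2 : ℝ) ≤
          (((compX V X).filter fun e => v ∈ e).card : ℝ)) := by
  refine ⟨fun V _ _ X hX hcycle => ?_, fun ε hε => ?_⟩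
  · obtain ⟨hlower, hupper⟩ := le_mul_and_mul_lt_of_eq_ceil_div (m := Fintype.card V + 1)
      three_pos (by exact_mod_cast hX)
    have hcard := three_le_card_of_hasTightHamCycle card_eq_three_of_mem_compX hcycle
    rcases eq_univ_or_three_mul_card_le_of_hasTightHamCycle hcycle with rfl | hle
    · rw [card_univ] at hupper
      omega
    · omega
  · obtain ⟨n₀, hn₀⟩ := eventually_atTop.1
      ((isLittleO_natCast_choose_pred one_lt_two).def (by positivity : 0 < 3 * ε))
    refine ⟨n₀, fun n hn V _ _ X hV hX v => ?_⟩
    obtain ⟨-, hupper⟩ := le_mul_and_mul_lt_of_eq_ceil_div (m := n + 1) three_pos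
      (by exact_mod_cast hX)
    have hdeg := le_vertexDegree_compX (X := X) (by omega) v
    have herror := hn₀ n hn
    rw [Real.norm_natCast, Real.norm_natCast] at herror
    rw [hV] at hdeg
    exact hdeg.trans' (by linarith)
end

section
/- Let n ≥ 3, let V be an n-element set, let X ⊆ V with |X| = ⌊n/3⌋ − 1, and let H be the 3-graph on V whose edges are all 3-element subsets of V having at least one vertex in X. Then H contains no matching of size ⌊n/3⌋, hence H contains no tight Hamiltonian cycle; moreover, for every ε > 0 there exists n_0 such that for all n ≥ n_0, δ(H) ≥ (5/9 − ε)·C(n−1,2). -/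
open Finset

/-- The 3-graph on `V` whose edges are all 3-element subsets of `V` meeting `X`. -/
def absX (V : Type) [DecidableEq V] [Fintype V] (X : Finset V) : Finset (Finset V) :=
  ((Finset.univ : Finset V).powersetCard 3).filter fun e => (e ∩ X).Nonempty

/-!
Each edge of a matching in `absX V X` uses up its own vertex of `X`, so a matching has at most `|X|`
edges, while cutting a tight Hamiltonian cycle into consecutive triples would give a matching of
size `⌊n/3⌋`. For the degree, the only triples through `v` that are not edges lie in `V \ X`; there
are at most `C(n - |X| - 1, 2)` of them, which is asymptotically `(2/3)² = 4/9` of all `C(n - 1, 2)`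
triples through `v`.
-/

section Matching

variable {α : Type*} [DecidableEq α]

theorem card_le_of_pairwise_disjoint_of_inter_nonempty {M : Finset (Finset α)} {X : Finset α}
    (hM : (M : Set (Finset α)).Pairwise Disjoint) (hX : ∀ e ∈ M, (e ∩ X).Nonempty) :
    #M ≤ #X := by
  have traces_disjoint : (M : Set (Finset α)).PairwiseDisjoint fun e => e ∩ X :=
    fun _ he _ he' hne => (hM he he' hne).mono inter_subset_left inter_subset_left
  calc #M ≤ #(M.biUnion fun e => e ∩ X) := card_le_card_biUnion traces_disjoint hX
    _ ≤ #X := card_le_card (biUnion_subset.2 fun _ _ => inter_subset_right)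

theorem pairwiseDisjoint_image_Ico_mul {g : ℕ → α} {n : ℕ} (hg : Set.InjOn g (Set.Iio n)) (r : ℕ) :
    Set.PairwiseDisjoint (Set.Iio (n / r))
      fun k => (Ico (r * k) (r * (k + 1))).image g := by
  have block_subset : ∀ k < n / r, Set.Ico (r * k) (r * (k + 1)) ⊆ Set.Iio n :=
    fun k hk i hi => hi.2.trans_le ((Nat.mul_le_mul_left r hk).trans (Nat.mul_div_le n r))
  have blocks_disjoint : Pairwise (Function.onFun Disjoint
      fun k => Set.Ico (r * k) (r * (k + 1))) :=
    Monotone.pairwise_disjoint_on_Ico_succ fun _ _ h => Nat.mul_le_mul_left r h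
  intro j hj k hk hjk
  rw [Function.onFun, ← disjoint_coe, coe_image, coe_image, coe_Ico, coe_Ico]
  exact (blocks_disjoint hjk).image hg (block_subset j hj) (block_subset k hk)

theorem exists_matching_of_image_Ico_mem {H : Finset (Finset α)} {g : ℕ → α} {n r : ℕ}
    (hg : Set.InjOn g (Set.Iio n)) (hH : ∀ i, i + r ≤ n → (Ico i (i + r)).image g ∈ H) :
    ∃ M ⊆ H, (M : Set (Finset α)).Pairwise Disjoint ∧ #M = n / r := by
  have blocks_disjoint := pairwiseDisjoint_image_Ico_mul hg r
  have block_ne_empty : ∀ k < n / r, (Ico (r * k) (r * (k + 1))).image g ≠ ∅ := by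
    intro k hk
    have hr : r ≠ 0 := fun h => by simp [h] at hk
    simpa [mul_add] using hr
  have blocks_injOn : Set.InjOn (fun k => (Ico (r * k) (r * (k + 1))).image g)
      (Set.Iio (n / r)) :=
    fun j hj k hk h => blocks_disjoint.eq_of_le hj hk (block_ne_empty j hj) h.le
  refine ⟨(range (n / r)).image fun k => (Ico (r * k) (r * (k + 1))).image g, ?_, ?_, ?_⟩
  · refine image_subset_iff.2 fun k hk => hH (r * k) ?_
    exact (Nat.mul_le_mul_left r (mem_range.1 hk)).trans (Nat.mul_div_le n r)
  · rw [coe_image, coe_range]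
    exact blocks_injOn.pairwise_image.2 blocks_disjoint
  · rw [card_image_of_injOn (by rwa [coe_range]), card_range]

theorem HasTightHamCycle.exists_matching {V : Type} [DecidableEq V] [Fintype V]
    {H : Finset (Finset V)} (h : HasTightHamCycle H) :
    ∃ M ⊆ H, (M : Set (Finset V)).Pairwise Disjoint ∧ #M = Fintype.card V / 3 := by
  obtain ⟨f, hf, hH⟩ := h
  refine exists_matching_of_image_Ico_mem (g := fun i : ℕ => f i) ?_ fun i _ => ?_
  · exact hf.injective.comp_injOn (CharP.natCast_injOn_Iio _ _)
  · have Ico_eq : Ico i (i + 3) = {i, i + 1, i + 2} := by grind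
    simpa [Ico_eq, image_insert] using hH i

end Matching

section Degree

theorem card_filter_mem_powersetCard {α : Type*} [DecidableEq α] {s : Finset α} {a : α}
    (ha : a ∈ s) (k : ℕ) : #{t ∈ s.powersetCard (k + 1) | a ∈ t} = (#s - 1).choose k := by
  simpa using card_filter_powersetCard_subset {a} s (k + 1) (by simpa) (by simp)

theorem card_filter_mem_powersetCard_le {α : Type*} [DecidableEq α] (s : Finset α) (a : α)
    (k : ℕ) : #{t ∈ s.powersetCard (k + 1) | a ∈ t} ≤ (#s - 1).choose k := by
  by_cases ha : a ∈ s
  · exact (card_filter_mem_powersetCard ha k).le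
  · rw [filter_false_of_mem fun t ht hat => ha ((mem_powersetCard.1 ht).1 hat)]
    exact Nat.zero_le _

variable {V : Type} [DecidableEq V] [Fintype V]

theorem powersetCard_sdiff_absX (X : Finset V) :
    univ.powersetCard 3 \ absX V X = Xᶜ.powersetCard 3 := by
  ext e
  simp only [absX, Finset.mem_sdiff, mem_filter, mem_powersetCard, subset_univ, true_and, not_and,
    not_nonempty_iff_eq_empty, ← disjoint_iff_inter_eq_empty, subset_compl_iff_disjoint_right]
  tauto

theorem choose_two_le_card_filter_mem_absX_add (X : Finset V) (v : V) :
    (Fintype.card V - 1).choose 2 ≤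
      #{e ∈ absX V X | v ∈ e} + (Fintype.card V - #X - 1).choose 2 := by
  have absX_subset : absX V X ⊆ univ.powersetCard 3 := filter_subset _ _
  calc (Fintype.card V - 1).choose 2
      = #{e ∈ univ.powersetCard 3 | v ∈ e} := (card_filter_mem_powersetCard (mem_univ v) 2).symm
    _ = #{e ∈ absX V X | v ∈ e} + #{e ∈ Xᶜ.powersetCard 3 | v ∈ e} := by
      rw [← powersetCard_sdiff_absX, ← card_union_of_disjoint
        (disjoint_filter_filter disjoint_sdiff), ← filter_union, union_sdiff_of_subset absX_subset]
    _ ≤ #{e ∈ absX V X | v ∈ e} + (Fintype.card V - #X - 1).choose 2 := by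
      rw [← card_compl]
      gcongr
      exact card_filter_mem_powersetCard_le Xᶜ v 2

end Degree

section Asymptotics

open Filter

variable {ε : ℝ}

theorem eventually_sq_affine_le (hε : 0 < ε) (β c : ℝ) :
    ∀ᶠ N : ℕ in atTop, (β * N + c) ^ 2 ≤ (β ^ 2 + ε) * (N * (N - 1)) := by
  have linear_le := (tendsto_natCast_atTop_atTop.const_mul_atTop hε).eventually_ge_atTop
    (2 * β * c + β ^ 2 + ε + c ^ 2)
  filter_upwards [linear_le, eventually_ge_atTop 1] with N hN one_le
  have one_le' : (1 : ℝ) ≤ N := by exact_mod_cast one_le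
  have quadratic_le := mul_le_mul_of_nonneg_right hN N.cast_nonneg
  have sq_le : c ^ 2 ≤ c ^ 2 * N := le_mul_of_one_le_right (sq_nonneg c) one_le'
  linarith

theorem eventually_choose_two_le (hε : 0 < ε) (β c : ℝ) :
    ∀ᶠ N : ℕ in atTop, ∀ m : ℕ, m ≤ β * N + c →
      (m.choose 2 : ℝ) ≤ (β ^ 2 + ε) * N.choose 2 := by
  filter_upwards [eventually_sq_affine_le hε β c] with N hN m hm
  rw [Nat.cast_choose_two, Nat.cast_choose_two]
  have hm₀ : (0 : ℝ) ≤ m := m.cast_nonneg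
  have sq_le : (m : ℝ) ^ 2 ≤ (β * N + c) ^ 2 := pow_le_pow_left₀ hm₀ hm 2
  linarith

theorem eventually_le_card_filter_mem_absX (hε : 0 < ε) (α c : ℝ) :
    ∀ᶠ n : ℕ in atTop, ∀ (V : Type) [DecidableEq V] [Fintype V] (X : Finset V),
      Fintype.card V = n → α * n - c ≤ #X →
      ∀ v : V, (1 - (1 - α) ^ 2 - ε) * ((n - 1).choose 2 : ℝ) ≤ #{e ∈ absX V X | v ∈ e} := by
  filter_upwards [(tendsto_sub_atTop_nat 1).eventually
    (eventually_choose_two_le hε (1 - α) (1 - α + c)), eventually_ge_atTop 1]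
    with n choose_le one_le V _ _ X hV hX v
  have card_le : #X ≤ n := hV ▸ card_le_univ X
  have card_outside_le : ((n - #X - 1 : ℕ) : ℝ) ≤ (1 - α) * (n - 1 : ℕ) + (1 - α + c) := by
    calc ((n - #X - 1 : ℕ) : ℝ) ≤ (n - #X : ℕ) := by exact_mod_cast Nat.sub_le _ 1
      _ = n - #X := Nat.cast_sub card_le
      _ ≤ (1 - α) * (n - 1 : ℕ) + (1 - α + c) := by
        rw [Nat.cast_sub one_le, Nat.cast_one]
        linarith
  have degree_ge : ((n - 1).choose 2 : ℝ) ≤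
      #{e ∈ absX V X | v ∈ e} + (n - #X - 1).choose 2 := by
    exact_mod_cast hV ▸ choose_two_le_card_filter_mem_absX_add X v
  linarith [choose_le _ card_outside_le]

end Asymptotics

/-- If `n ≥ 3` and `|X| = ⌊n/3⌋ - 1`, then the 3-graph of all triples meeting `X` has no
matching of size `⌊n/3⌋`, hence no tight Hamiltonian cycle; moreover for every `ε > 0`
its minimum vertex degree is at least `(5/9 - ε)·C(n-1,2)` once `n` is large. -/
theorem stmt_3 :
    (∀ n : ℕ, 3 ≤ n → ∀ (V : Type) [DecidableEq V] [Fintype V], ∀ X : Finset V,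
        Fintype.card V = n → X.card = n / 3 - 1 →
        (¬ ∃ M : Finset (Finset V), M ⊆ absX V X ∧
            (M : Set (Finset V)).Pairwise Disjoint ∧ M.card = n / 3) ∧
        ¬ HasTightHamCycle (absX V X)) ∧
    (∀ ε : ℝ, 0 < ε → ∃ n₀ : ℕ, ∀ n : ℕ, n₀ ≤ n →
      ∀ (V : Type) [DecidableEq V] [Fintype V], ∀ X : Finset V,
        Fintype.card V = n → X.card = n / 3 - 1 →
        ∀ v : V, (5 / 9 - ε) * ((n - 1).choose 2 : ℝ) ≤
          (((absX V X).filter fun e => v ∈ e).card : ℝ)) := by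
  constructor
  · intro n hn V _ _ X hV hX
    have no_matching : ¬ ∃ M : Finset (Finset V), M ⊆ absX V X ∧
        (M : Set (Finset V)).Pairwise Disjoint ∧ M.card = n / 3 := by
      rintro ⟨M, hMH, hM, hcard⟩
      have := card_le_of_pairwise_disjoint_of_inter_nonempty hM
        fun e he => (mem_filter.1 (hMH he)).2
      omega
    exact ⟨no_matching, fun hcycle => no_matching (hV ▸ hcycle.exists_matching)⟩
  · intro ε hε
    obtain ⟨n₀, hn₀⟩ :=
      Filter.eventually_atTop.1 (eventually_le_card_filter_mem_absX hε (1 / 3) (5 / 3))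
    refine ⟨n₀, fun n hn V _ _ X hV hX v => ?_⟩
    have card_ge : 1 / 3 * (n : ℝ) - 5 / 3 ≤ #X := by
      have : (n : ℝ) ≤ 3 * #X + 5 := by exact_mod_cast (by omega : n ≤ 3 * #X + 5)
      linarith
    convert hn₀ n hn V X hV card_ge v using 2
    norm_num
end
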